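/- Let G be the simple graph on vertex set {1, 2, …, 9} with edge set {{1,7},{1,4},{2,8},{2,5},{3,9},{3,6},{7,5},{7,6},{8,4},{8,6},{9,4},{9,5}}, let M be the collection of stable sets of G that are maximal with respect to inclusion, and let P ⊆ ℝ^9 be the convex hull of the indicator vectors { e_S : S ∈ M }. Let A = {1,2,3} and B = {4,5,6} (both lie in M). Then: (1) the segment [e_A, e_B] is NOT an extreme subset (face) of P, so e_A and e_B do not form an edge of P; and yet (2) for all C, D ∈ M, the equality e_A + e_B = e_C + e_D implies {C, D} = {A, B}. Hence the edge criterion 'e_A and e_B form an edge iff e_A + e_B has a unique decomposition as a sum of two vertices' fails for the polytope built from the inclusion-maximal stable sets. -/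

import Mathlib

/-- Indicator vector of a finite subset of `Fin 9`, as a vector in `ℝ^9`. -/
def indVec (A : Finset (Fin 9)) : Fin 9 → ℝ := fun v => if v ∈ A then 1 else 0

/-- A set of vertices is stable if no two of its elements are adjacent. -/
def IsStable (G : SimpleGraph (Fin 9)) (A : Finset (Fin 9)) : Prop :=
  ∀ v ∈ A, ∀ w ∈ A, ¬ G.Adj v w

/-- The graph of Remark `maximal-sets-polytope-graph` on the vertex set `{1, …, 9}`
(here the vertices `1, …, 9` are represented by `0, …, 8 : Fin 9`), with edge set
`{{1,7},{1,4},{2,8},{2,5},{3,9},{3,6},{7,5},{7,6},{8,4},{8,6},{9,4},{9,5}}`. -/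
def G14 : SimpleGraph (Fin 9) :=
  SimpleGraph.fromEdgeSet
    {s(0, 6), s(0, 3), s(1, 7), s(1, 4), s(2, 8), s(2, 5),
     s(6, 4), s(6, 5), s(7, 3), s(7, 5), s(8, 3), s(8, 4)}

/-- The collection of inclusion-maximal stable sets of `G14`. -/
def M14 : Set (Finset (Fin 9)) :=
  {S | IsStable G14 S ∧ ∀ T : Finset (Fin 9), IsStable G14 T → S ⊆ T → S = T}

/-- The polytope spanned by the indicator vectors of the inclusion-maximal stable sets. -/
def P14 : Set (Fin 9 → ℝ) :=
  convexHull ℝ {x | ∃ S ∈ M14, x = indVec S}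

/-!
Vertices `i`, `i + 3`, `i + 6` (`i = 0, 1, 2`) form a path centred at `i`, and the hub `i + 6` is
moreover adjacent to the two vertices `j + 3`, `j ≠ i`.

* The three maximal stable sets `{i} ∪ {j + 3 | j ≠ i}` have barycentre `(e_A + 2 e_B) / 3`. This
  point lies on the segment `[e_A, e_B]`, so a face containing the segment contains all three
  vertices, whereas a segment between two vertices of the cube contains no third one.
* If `e_A + e_B = e_C + e_D`, then `C` and `D` partition `A ∪ B`, and the edges `{i, i + 3}` force
  `D` to be the opposite choice of `C` in each pair. Neither `C` nor `D` contains a hub, so both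
  contain a neighbour of every hub; this excludes every choice except `A` and `B`.
-/

theorem mem_of_isExtreme_of_sum_mem {𝕜 E ι : Type*} [Field 𝕜] [LinearOrder 𝕜]
    [IsStrictOrderedRing 𝕜] [AddCommGroup E] [Module 𝕜 E] {K F : Set E} (hF : IsExtreme 𝕜 K F)
    (hK : Convex 𝕜 K) {t : Finset ι} {w : ι → 𝕜} {z : ι → E} (hw₀ : ∀ i ∈ t, 0 ≤ w i)
    (hw₁ : ∑ i ∈ t, w i = 1) (hz : ∀ i ∈ t, z i ∈ K) (hsum : ∑ i ∈ t, w i • z i ∈ F)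
    {i : ι} (hi : i ∈ t) (hwi : 0 < w i) : z i ∈ F := by
  classical
  have hrest₀ : ∀ j ∈ t.erase i, 0 ≤ w j := fun j hj ↦ hw₀ j (Finset.mem_of_mem_erase hj)
  have hsplit : w i + ∑ j ∈ t.erase i, w j = 1 := by rw [Finset.add_sum_erase t w hi, hw₁]
  rw [← Finset.add_sum_erase t _ hi] at hsum
  rcases (Finset.sum_nonneg hrest₀).eq_or_lt with hrest | hrest
  · have hzero : ∀ j ∈ t.erase i, w j = 0 := (Finset.sum_eq_zero_iff_of_nonneg hrest₀).1 hrest.symm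
    have hone : w i = 1 := by rwa [← hrest, add_zero] at hsplit
    rwa [hone, one_smul, Finset.sum_eq_zero fun j hj ↦ by rw [hzero j hj, zero_smul],
      add_zero] at hsum
  · have hmass : (t.erase i).centerMass w z ∈ K :=
      hK.centerMass_mem hrest₀ hrest fun j hj ↦ hz j (Finset.mem_of_mem_erase hj)
    refine hF.left_mem_of_mem_openSegment (hz i hi) hmass hsum ⟨_, _, hwi, hrest, hsplit, ?_⟩
    rw [Finset.centerMass, smul_inv_smul₀ hrest.ne']

theorem indicator_mem_extremePoints_unitCube {ι : Type*} (s : Set ι) :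
    s.indicator (1 : ι → ℝ) ∈
      (Set.univ.pi fun _ : ι ↦ Set.Icc (0 : ℝ) 1).extremePoints ℝ := by
  simp only [extremePoints_pi, Set.extremePoints_Icc zero_le_one]
  exact fun v _ ↦ Set.indicator_eq_zero_or_self s 1 v

theorem eq_or_eq_of_indicator_mem_segment {ι : Type*} {s t u : Set ι}
    (h : u.indicator (1 : ι → ℝ) ∈ segment ℝ (s.indicator 1) (t.indicator 1)) :
    s = u ∨ t = u :=
  ((mem_extremePoints_iff_forall_segment.1 (indicator_mem_extremePoints_unitCube u)).2
    _ (indicator_mem_extremePoints_unitCube s).1 _ (indicator_mem_extremePoints_unitCube t).1 h).imp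
    (Set.indicator_one_inj ℝ) (Set.indicator_one_inj ℝ)

theorem indicator_add_indicator_eq_iff {α R : Type*} [AddMonoidWithOne R] [CharZero R]
    {s t u v : Set α} :
    s.indicator (1 : α → R) + t.indicator 1 = u.indicator 1 + v.indicator 1 ↔
      s ∪ t = u ∪ v ∧ s ∩ t = u ∩ v := by
  classical
  simp only [funext_iff, Set.ext_iff, ← forall_and, Pi.add_apply, Set.indicator_apply,
    Pi.one_apply, Set.mem_union, Set.mem_inter_iff]
  refine forall_congr' fun x ↦ ?_
  by_cases x ∈ s <;> by_cases x ∈ t <;> by_cases x ∈ u <;> by_cases x ∈ v <;>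
    simp [*, one_add_one_eq_two]

theorem maximal_isIndepSet_iff {V : Type*} {G : SimpleGraph V} {S : Finset V} :
    Maximal (fun T : Finset V ↦ G.IsIndepSet T) S ↔
      G.IsIndepSet S ∧ ∀ v ∉ S, ∃ w ∈ S, G.Adj v w := by
  classical
  have : Std.Symm fun v w ↦ ¬ G.Adj v w := ⟨fun _ _ hvw hwv ↦ hvw hwv.symm⟩
  rw [Finset.maximal_iff_forall_insert fun _ _ hT hST ↦ hT.mono (Finset.coe_subset.2 hST)]
  refine and_congr_right fun hS ↦ forall₂_congr fun v hv ↦ ?_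
  rw [Finset.coe_insert, SimpleGraph.IsIndepSet,
    Set.pairwise_insert_of_symm_of_notMem (Finset.mem_coe.not.2 hv),
    and_iff_right (G.isIndepSet_iff.1 hS)]
  simp only [Finset.mem_coe, not_forall, not_not, exists_prop]

theorem mem_iff_mem_of_adj {V : Type*} {G : SimpleGraph V} {S T : Set V} (hS : G.IsIndepSet S)
    (hT : G.IsIndepSet T) {v w : V} (hv : v ∈ S ∨ v ∈ T) (hw : w ∈ S ∨ w ∈ T) (hvw : G.Adj v w) :
    v ∈ S ↔ w ∈ T :=
  ⟨fun hvS ↦ hw.resolve_left fun hwS ↦ hS hvS hwS hvw.ne hvw,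
    fun hwT ↦ hv.resolve_right fun hvT ↦ hT hvT hwT hvw.ne hvw⟩

theorem indVec_eq_indicator (S : Finset (Fin 9)) :
    indVec S = (S : Set (Fin 9)).indicator 1 := by
  ext v
  simp [indVec, Set.indicator_apply]

theorem isStable_iff_isIndepSet {G : SimpleGraph (Fin 9)} {S : Finset (Fin 9)} :
    IsStable G S ↔ G.IsIndepSet S :=
  ⟨fun h _ hv _ hw _ ↦ h _ hv _ hw, fun h _ hv _ hw hvw ↦ h hv hw hvw.ne hvw⟩

theorem mem_M14_iff_maximal {S : Finset (Fin 9)} :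
    S ∈ M14 ↔ Maximal (fun T : Finset (Fin 9) ↦ G14.IsIndepSet T) S := by
  simp only [M14, Set.mem_ofPred_eq, isStable_iff_isIndepSet, maximal_iff]

theorem mem_M14_iff {S : Finset (Fin 9)} :
    S ∈ M14 ↔ G14.IsIndepSet S ∧ ∀ v ∉ S, ∃ w ∈ S, G14.Adj v w :=
  mem_M14_iff_maximal.trans maximal_isIndepSet_iff

instance : DecidableRel G14.Adj := by
  delta G14
  infer_instance

instance : DecidablePred (· ∈ M14) := fun _ ↦ decidable_of_iff' _ mem_M14_iff

theorem zero_one_two_mem_M14 : {0, 1, 2} ∈ M14 := by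
  decide

theorem three_four_five_mem_M14 : {3, 4, 5} ∈ M14 := by
  decide

/-- The stable set `{i} ∪ {j + 3 | j ≠ i}`, meeting `{0, 1, 2}` once and `{3, 4, 5}` twice. -/
def mixedTriple : Fin 3 → Finset (Fin 9) :=
  ![{0, 4, 5}, {1, 3, 5}, {2, 3, 4}]

theorem mixedTriple_mem_M14 : ∀ i, mixedTriple i ∈ M14 := by
  decide

theorem indVec_mem_P14 {S : Finset (Fin 9)} (hS : S ∈ M14) : indVec S ∈ P14 :=
  subset_convexHull ℝ _ ⟨S, hS, rfl⟩

theorem sum_indVec_mixedTriple :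
    ∑ i, (1 / 3 : ℝ) • indVec (mixedTriple i) =
      (1 / 3 : ℝ) • indVec {0, 1, 2} + (2 / 3 : ℝ) • indVec {3, 4, 5} := by
  calc ∑ i, (1 / 3 : ℝ) • indVec (mixedTriple i)
    _ = (1 / 3 : ℝ) • indVec {0, 4, 5} + (1 / 3 : ℝ) • indVec {1, 3, 5} +
          (1 / 3 : ℝ) • indVec {2, 3, 4} := Fin.sum_univ_three _
    _ = (1 / 3 : ℝ) • indVec {0, 1, 2} + (2 / 3 : ℝ) • indVec {3, 4, 5} := by
      ext v
      fin_cases v <;> simp [indVec] <;> norm_num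

theorem not_isExtreme_P14_segment :
    ¬ IsExtreme ℝ P14 (segment ℝ (indVec {0, 1, 2}) (indVec {3, 4, 5})) := by
  intro hface
  have hbary : ∑ i, (1 / 3 : ℝ) • indVec (mixedTriple i) ∈
      segment ℝ (indVec {0, 1, 2}) (indVec {3, 4, 5}) := by
    rw [sum_indVec_mixedTriple]
    exact ⟨1 / 3, 2 / 3, by norm_num, by norm_num, by norm_num, rfl⟩
  have hmem : indVec (mixedTriple 0) ∈ segment ℝ (indVec {0, 1, 2}) (indVec {3, 4, 5}) :=
    mem_of_isExtreme_of_sum_mem hface (convex_convexHull ℝ _) (fun _ _ ↦ by norm_num)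
      (by norm_num) (fun i _ ↦ indVec_mem_P14 (mixedTriple_mem_M14 i)) hbary
      (Finset.mem_univ 0) (by norm_num)
  simp only [indVec_eq_indicator] at hmem
  have hends := eq_or_eq_of_indicator_mem_segment hmem
  simp only [Finset.coe_inj] at hends
  revert hends
  decide

theorem exists_mem_hub_neighbors {S : Finset (Fin 9)} (hS : S ∈ M14)
    (hcore : S ⊆ {0, 1, 2} ∪ {3, 4, 5}) :
    (0 ∈ S ∨ 4 ∈ S ∨ 5 ∈ S) ∧ (1 ∈ S ∨ 3 ∈ S ∨ 5 ∈ S) ∧ (2 ∈ S ∨ 3 ∈ S ∨ 4 ∈ S) := by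
  have hdom (v : Fin 9) (hv : v ∉ ({0, 1, 2} ∪ {3, 4, 5} : Finset (Fin 9))) :
      ∃ w, G14.Adj v w ∧ w ∈ S := by
    obtain ⟨w, hw, hvw⟩ := (mem_M14_iff.1 hS).2 v fun hvS ↦ hv (hcore hvS)
    exact ⟨w, hvw, hw⟩
  have hub₀ : ∀ w, G14.Adj 6 w ↔ w = 0 ∨ w = 4 ∨ w = 5 := by decide
  have hub₁ : ∀ w, G14.Adj 7 w ↔ w = 1 ∨ w = 3 ∨ w = 5 := by decide
  have hub₂ : ∀ w, G14.Adj 8 w ↔ w = 2 ∨ w = 3 ∨ w = 4 := by decide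
  exact ⟨by simpa [hub₀] using hdom 6 (by decide), by simpa [hub₁] using hdom 7 (by decide),
    by simpa [hub₂] using hdom 8 (by decide)⟩

theorem eq_and_eq_of_partition_of_zero_mem {C D : Finset (Fin 9)} (hC : C ∈ M14) (hD : D ∈ M14)
    (hunion : C ∪ D = {0, 1, 2} ∪ {3, 4, 5}) (hdisj : Disjoint C D) (h0 : 0 ∈ C) :
    C = {0, 1, 2} ∧ D = {3, 4, 5} := by
  have opposite (v w : Fin 9) (hvw : G14.Adj v w)
      (hv : v ∈ ({0, 1, 2} ∪ {3, 4, 5} : Finset (Fin 9)))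
      (hw : w ∈ ({0, 1, 2} ∪ {3, 4, 5} : Finset (Fin 9))) : v ∈ C ↔ w ∈ D := by
    rw [← hunion, Finset.mem_union] at hv hw
    exact mem_iff_mem_of_adj (mem_M14_iff.1 hC).1 (mem_M14_iff.1 hD).1 hv hw hvw
  have h03 : 0 ∈ C ↔ 3 ∈ D := opposite 0 3 (by decide) (by decide) (by decide)
  have h14 : 1 ∈ C ↔ 4 ∈ D := opposite 1 4 (by decide) (by decide) (by decide)
  have h25 : 2 ∈ C ↔ 5 ∈ D := opposite 2 5 (by decide) (by decide) (by decide)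
  have hnotMem {v : Fin 9} (hvC : v ∈ C) : v ∉ D := Finset.disjoint_left.1 hdisj hvC
  have h3 : 3 ∉ C := fun h ↦ hnotMem h (h03.1 h0)
  obtain ⟨-, hub₁, hub₂⟩ := exists_mem_hub_neighbors hC (hunion ▸ Finset.subset_union_left)
  obtain ⟨hub₀, -, -⟩ := exists_mem_hub_neighbors hD (hunion ▸ Finset.subset_union_right)
  have h45 : 4 ∈ D ∨ 5 ∈ D := hub₀.resolve_left (hnotMem h0)
  have h15 : 1 ∈ C ∨ 5 ∈ C := hub₁.imp_right fun h ↦ h.resolve_left h3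
  have h24 : 2 ∈ C ∨ 4 ∈ C := hub₂.imp_right fun h ↦ h.resolve_left h3
  have h12 : 1 ∈ C ∧ 2 ∈ C := by
    rcases h45 with h4 | h5
    · exact ⟨h14.2 h4, h24.resolve_right fun h ↦ hnotMem h h4⟩
    · exact ⟨h15.resolve_right fun h ↦ hnotMem h h5, h25.2 h5⟩
  have hsubC : {0, 1, 2} ⊆ C := by simp [Finset.insert_subset_iff, h0, h12]
  have hsubD : {3, 4, 5} ⊆ D := by
    simp [Finset.insert_subset_iff, h03.1 h0, h14.1 h12.1, h25.1 h12.2]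
  exact ⟨(zero_one_two_mem_M14.2 C hC.1 hsubC).symm, (three_four_five_mem_M14.2 D hD.1 hsubD).symm⟩

theorem pair_eq_of_indVec_add_indVec_eq {C D : Finset (Fin 9)} (hC : C ∈ M14) (hD : D ∈ M14)
    (hsum : indVec {0, 1, 2} + indVec {3, 4, 5} = indVec C + indVec D) :
    ({C, D} : Set (Finset (Fin 9))) = {{0, 1, 2}, {3, 4, 5}} := by
  simp only [indVec_eq_indicator] at hsum
  obtain ⟨hunion, hinter⟩ := indicator_add_indicator_eq_iff.1 hsum
  norm_cast at hunion hinter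
  have hdisj : Disjoint C D := by
    rw [Finset.disjoint_iff_inter_eq_empty, ← hinter]
    decide
  have h0 : 0 ∈ C ∪ D := by
    rw [← hunion]
    decide
  rcases Finset.mem_union.1 h0 with h0C | h0D
  · obtain ⟨rfl, rfl⟩ := eq_and_eq_of_partition_of_zero_mem hC hD hunion.symm hdisj h0C
    rfl
  · obtain ⟨rfl, rfl⟩ := eq_and_eq_of_partition_of_zero_mem hD hC
      (by rw [Finset.union_comm, hunion]) hdisj.symm h0D
    exact Set.pair_comm _ _

/-- For the polytope of inclusion-maximal stable sets of `G14`, the sets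
`A = {1,2,3}` and `B = {4,5,6}` (represented as `{0,1,2}` and `{3,4,5}`) both lie in
`M14`, the segment `[e_A, e_B]` is *not* a face of the polytope, and yet `e_A + e_B` has
a unique decomposition as a sum of two vertices.  Hence the edge criterion (E) fails for
this polytope. -/
theorem maximal_stable_polytope_fails_edge_criterion :
    ({0, 1, 2} : Finset (Fin 9)) ∈ M14 ∧ ({3, 4, 5} : Finset (Fin 9)) ∈ M14 ∧
    ¬ IsExtreme ℝ P14
        (segment ℝ (indVec ({0, 1, 2} : Finset (Fin 9)))
          (indVec ({3, 4, 5} : Finset (Fin 9)))) ∧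
    (∀ C ∈ M14, ∀ D ∈ M14,
      indVec ({0, 1, 2} : Finset (Fin 9)) + indVec ({3, 4, 5} : Finset (Fin 9))
          = indVec C + indVec D →
        ({C, D} : Set (Finset (Fin 9)))
          = {({0, 1, 2} : Finset (Fin 9)), ({3, 4, 5} : Finset (Fin 9))}) :=
  ⟨zero_one_two_mem_M14, three_four_five_mem_M14, not_isExtreme_P14_segment,
    fun _ hC _ hD ↦ pair_eq_of_indVec_add_indVec_eq hC hD⟩
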